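/- arXiv:2209.04058 — 8 statements merged into one kernel-verified Lean document; each statement's English description precedes it below -/
import Mathlib

section
/- Consider the mechanism SimpleScaledGreedy run on an instance p and a predicted instance p̂ with predicted schedule x̂. If p̂ = p, then for every machine i and every job j with j ∈ M_i \ M̂_i, the scalar satisfies r(i,j) = n. -/
open scoped Classical
noncomputable section
variable {n m : ℕ}

/-- The makespan of allocation `a` under instance `p`. -/
def MS [NeZero n] (p : Fin n → Fin m → ℝ) (a : Fin m → Fin n) : ℝ :=
  Finset.univ.sup' Finset.univ_nonempty fun i => ∑ j, if a j = i then p i j else 0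

/-- The optimal makespan of instance `p`. -/
def OPT [NeZero n] (p : Fin n → Fin m → ℝ) : ℝ :=
  Finset.univ.inf' Finset.univ_nonempty fun a : Fin m → Fin n => MS p a

/-- The scalars used by `SimpleScaledGreedy`. -/
def ssgR (phat : Fin n → Fin m → ℝ) (xhat : Fin m → Fin n) (i : Fin n) (j : Fin m) : ℝ :=
  max 1 (min (phat (xhat j) j / phat i j) (n : ℝ))

lemma exists_argmin [NeZero n] (v : Fin n → ℝ) :
    (Finset.univ.filter fun i => ∀ i', v i ≤ v i').Nonempty := by
  obtain ⟨i, -, hi⟩ := Finset.exists_min_image Finset.univ v Finset.univ_nonempty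
  exact ⟨i, by
    simp only [Finset.mem_filter, Finset.mem_univ, true_and]
    exact fun i' => hi i' (Finset.mem_univ i')⟩

/-- The allocation computed by `SimpleScaledGreedy`: job `j` goes to a machine minimizing
`r(i,j)·p(i,j)`, with ties broken in favor of the predicted machine `x̂ j` and otherwise
in favor of the smallest-index machine. -/
def ssgAssign [NeZero n] (p phat : Fin n → Fin m → ℝ) (xhat : Fin m → Fin n) (j : Fin m) :
    Fin n :=
  let v : Fin n → ℝ := fun i => ssgR phat xhat i j * p i j
  if ∀ i, v (xhat j) ≤ v i then xhat j
  else (Finset.univ.filter fun i => ∀ i', v i ≤ v i').min' (exists_argmin v)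
/-- If `SimpleScaledGreedy` is run with an accurate prediction `p̂ = p`, then
every job `j ∈ M_i \ M̂_i` has scalar `r(i,j) = n`. -/
theorem ssg_scalar_eq_n [NeZero n]
    (p phat : Fin n → Fin m → ℝ) (xhat : Fin m → Fin n)
    (hp : ∀ i j, 0 < p i j) (hphat : ∀ i j, 0 < phat i j)
    (hpred : phat = p) (i : Fin n) (j : Fin m)
    (hMi : ssgAssign p phat xhat j = i) (hMhat : xhat j ≠ i) :
    ssgR phat xhat i j = n := by
  subst hpred
  have hn : (1 : ℝ) ≤ n := by exact_mod_cast Nat.one_le_iff_ne_zero.mpr (NeZero.ne n)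
  unfold ssgAssign at hMi
  simp only at hMi
  split_ifs at hMi with h
  · exact absurd hMi hMhat
  · have hmem := Finset.min'_mem _ (exists_argmin fun i => ssgR phat xhat i j * phat i j)
    rw [hMi] at hmem
    simp only [Finset.mem_filter, Finset.mem_univ, true_and] at hmem
    push Not at h
    obtain ⟨i0, hi0⟩ := h
    have hlt := lt_of_le_of_lt (hmem i0) hi0
    have hx : ssgR phat xhat (xhat j) j = 1 := by
      unfold ssgR
      rw [div_self (hphat _ _).ne', min_eq_left hn, max_self]
    rw [hx, one_mul] at hlt
    unfold ssgR at hlt ⊢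
    rcases le_total (n : ℝ) (phat (xhat j) j / phat i j) with hq | hq
    · rw [min_eq_right hq, max_eq_right hn]
    · rw [min_eq_left hq] at hlt
      have h1 := mul_le_mul_of_nonneg_right
        (le_max_right 1 (phat (xhat j) j / phat i j)) (hphat i j).le
      rw [div_mul_cancel₀ _ (hphat i j).ne'] at h1
      exact absurd hlt (not_lt.mpr h1)
end
end

section
/- Consider the mechanism SimpleScaledGreedy run on an instance p and a predicted instance p̂, with a predicted schedule x̂ satisfying MS(p̂, x̂) ≤ α·OPT(p̂) for some α ≥ 1. If p̂ = p, then for every machine i, the sum over all jobs j ∈ M_i \ M̂_i of p(i,j) is at most α·OPT(p). -/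
open scoped Classical
noncomputable section
variable {n m : ℕ}

lemma ssg_key [NeZero n] (p : Fin n → Fin m → ℝ) (xhat : Fin m → Fin n)
    (hp : ∀ i j, 0 < p i j) (i : Fin n) (j : Fin m)
    (h : ssgAssign p p xhat j = i) (hne : xhat j ≠ i) :
    (n : ℝ) * p i j ≤ p (xhat j) j := by
  unfold ssgAssign at h
  simp only at h
  split_ifs at h with hc
  · exact absurd h hne
  · have hmem := Finset.min'_mem _ (exists_argmin fun i => ssgR p xhat i j * p i j)
    rw [h] at hmem
    simp only [Finset.mem_filter, Finset.mem_univ, true_and] at hmem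
    have hlt : ssgR p xhat i j * p i j < ssgR p xhat (xhat j) j * p (xhat j) j := by
      by_contra hcon
      push Not at hcon
      exact hc fun i' => hcon.trans (hmem i')
    have h1 : ssgR p xhat (xhat j) j = 1 := by
      unfold ssgR
      rw [div_self (hp _ _).ne']
      exact max_eq_left (min_le_left _ _)
    rw [h1, one_mul] at hlt
    have hmin : min (p (xhat j) j / p i j) (n : ℝ) * p i j < p (xhat j) j :=
      lt_of_le_of_lt (mul_le_mul_of_nonneg_right (le_max_right _ _) (hp i j).le) hlt
    rcases le_total (p (xhat j) j / p i j) (n : ℝ) with hl | hl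
    · rw [min_eq_left hl, div_mul_cancel₀ _ (hp i j).ne'] at hmin
      exact absurd hmin (lt_irrefl _)
    · rw [min_eq_right hl] at hmin
      exact hmin.le

/-- If `SimpleScaledGreedy` is run with an accurate prediction `p̂ = p` and a
predicted schedule `x̂` with `MS(p̂,x̂) ≤ α·OPT(p̂)`, then for every machine `i` the total
processing time of the jobs in `M_i \ M̂_i` is at most `α·OPT(p)`. -/
theorem ssg_bound_difference [NeZero n]
    (p phat : Fin n → Fin m → ℝ) (xhat : Fin m → Fin n) (α : ℝ)
    (hp : ∀ i j, 0 < p i j) (hphat : ∀ i j, 0 < phat i j)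
    (hα : 1 ≤ α) (hMS : MS phat xhat ≤ α * OPT phat)
    (hpred : phat = p) (i : Fin n) :
    ∑ j ∈ Finset.univ.filter (fun j => ssgAssign p phat xhat j = i ∧ xhat j ≠ i), p i j
      ≤ α * OPT p := by
  subst hpred
  refine le_trans ?_ hMS
  have hn : (0 : ℝ) < n := by exact_mod_cast Nat.pos_of_ne_zero (NeZero.ne n)
  refine le_of_mul_le_mul_left ?_ hn
  rw [Finset.mul_sum]
  calc _ ≤ ∑ j ∈ Finset.univ.filter (fun j => ssgAssign phat phat xhat j = i ∧ xhat j ≠ i),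
        phat (xhat j) j := by
        refine Finset.sum_le_sum fun j hj => ?_
        simp only [Finset.mem_filter, Finset.mem_univ, true_and] at hj
        exact ssg_key phat xhat hp i j hj.1 hj.2
    _ ≤ ∑ j, phat (xhat j) j :=
        Finset.sum_le_sum_of_subset_of_nonneg (Finset.filter_subset _ _)
          fun j _ _ => (hp _ _).le
    _ = ∑ k : Fin n, ∑ j, if xhat j = k then phat k j else 0 := by
        rw [Finset.sum_comm]
        refine Finset.sum_congr rfl fun j _ => ?_
        simp
    _ ≤ ∑ _k : Fin n, MS phat xhat :=
        Finset.sum_le_sum fun k _ => Finset.le_sup'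
          (fun i => ∑ j, if xhat j = i then phat i j else 0) (Finset.mem_univ k)
    _ = n * MS phat xhat := by simp
end
end

section
/- The mechanism SimpleScaledGreedy is n²-robust: for every instance p and every predicted instance p̂ (with any predicted schedule x̂), the allocation x it outputs satisfies MS(p, x) ≤ n²·OPT(p). -/
open scoped Classical
noncomputable section
variable {n m : ℕ}

lemma ssg_argmin [NeZero n] (p phat : Fin n → Fin m → ℝ) (xhat : Fin m → Fin n) (j : Fin m)
    (i : Fin n) :
    ssgR phat xhat (ssgAssign p phat xhat j) j * p (ssgAssign p phat xhat j) j
      ≤ ssgR phat xhat i j * p i j := by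
  by_cases h : ∀ i, ssgR phat xhat (xhat j) j * p (xhat j) j ≤ ssgR phat xhat i j * p i j
  · have e : ssgAssign p phat xhat j = xhat j := by
      unfold ssgAssign
      exact if_pos h
    rw [e]
    exact h i
  · have e : ssgAssign p phat xhat j = (Finset.univ.filter fun i => ∀ i',
        (fun i => ssgR phat xhat i j * p i j) i ≤ (fun i => ssgR phat xhat i j * p i j) i').min'
        (exists_argmin (fun i => ssgR phat xhat i j * p i j)) := by
      unfold ssgAssign
      exact if_neg h
    have hm := Finset.min'_mem _ (exists_argmin (fun i => ssgR phat xhat i j * p i j))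
    rw [← e] at hm
    exact (Finset.mem_filter.mp hm).2 i

lemma ssg_job [NeZero n] (p phat : Fin n → Fin m → ℝ) (xhat : Fin m → Fin n)
    (hp : ∀ i j, 0 < p i j) (j : Fin m) (i : Fin n) :
    p (ssgAssign p phat xhat j) j ≤ n * p i j := by
  have hn : (1 : ℝ) ≤ n := by exact_mod_cast NeZero.one_le
  have h1 : (1 : ℝ) ≤ ssgR phat xhat (ssgAssign p phat xhat j) j := le_max_left _ _
  have h2 : ssgR phat xhat i j ≤ n := max_le hn (min_le_right _ _)
  calc _ ≤ ssgR phat xhat (ssgAssign p phat xhat j) j * p (ssgAssign p phat xhat j) j :=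
        le_mul_of_one_le_left (hp _ _).le h1
    _ ≤ ssgR phat xhat i j * p i j := ssg_argmin p phat xhat j i
    _ ≤ _ := mul_le_mul_of_nonneg_right h2 (hp _ _).le

/-- `SimpleScaledGreedy` is `n²`-robust: for every instance `p` and every
prediction `p̂` (with any predicted schedule `x̂`), its output allocation has makespan at most
`n²·OPT(p)`. -/
theorem ssg_robustness [NeZero n]
    (p phat : Fin n → Fin m → ℝ) (xhat : Fin m → Fin n)
    (hp : ∀ i j, 0 < p i j) (hphat : ∀ i j, 0 < phat i j) :
    MS p (ssgAssign p phat xhat) ≤ (n : ℝ) ^ 2 * OPT p := by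
  obtain ⟨b, -, hb⟩ := Finset.exists_mem_eq_inf' (Finset.univ_nonempty)
    (fun a : Fin m → Fin n => MS p a)
  have hO : OPT p = MS p b := hb
  rw [hO]
  have hsum : ∑ j, p (b j) j ≤ n * MS p b := by
    have e : ∑ j, p (b j) j = ∑ i, ∑ j, if b j = i then p i j else 0 := by
      rw [Finset.sum_comm]
      simp
    rw [e]
    calc _ ≤ ∑ _i : Fin n, MS p b := Finset.sum_le_sum fun i _ =>
          Finset.le_sup' (fun i => ∑ j, if b j = i then p i j else 0) (Finset.mem_univ i)
      _ = _ := by simp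
  refine Finset.sup'_le _ _ fun i _ => ?_
  calc _ ≤ ∑ j, n * p (b j) j := Finset.sum_le_sum fun j _ => by
        split_ifs with h
        · have := ssg_job p phat xhat hp j (b j)
          rwa [h] at this
        · exact mul_nonneg (Nat.cast_nonneg _) (hp _ _).le
    _ = n * ∑ j, p (b j) j := by rw [Finset.mul_sum]
    _ ≤ n * (n * MS p b) := mul_le_mul_of_nonneg_left hsum (Nat.cast_nonneg _)
    _ = _ := by ring
end
end

section
/- The n²-robustness of SimpleScaledGreedy is asymptotically tight: for every n ≥ 2 and every ε > 0, there exist an instance p, a predicted instance p̂ (on n machines and 2n−2 jobs, with nonnegative processing times), and a predicted schedule x̂ that is optimal for p̂, such that the allocation x output by SimpleScaledGreedy satisfies MS(p, x) ≥ n(n−1) while OPT(p) ≤ 1 + ε; hence MS(p,x) ≥ (n(n−1)/(1+ε))·OPT(p). -/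
open scoped Classical
noncomputable section
variable {n m : ℕ}

lemma aux_card (n : ℕ) (hn : 2 ≤ n) :
    (Finset.univ.filter fun j : Fin (2 * n - 2) => (j : ℕ) < n - 1).card = n - 1 := by
  rw [Fin.card_filter_val_lt]
  omega

lemma aux_sum (n : ℕ) (hn : 2 ≤ n) (c : ℝ) :
    (∑ j : Fin (2 * n - 2), if (j : ℕ) < n - 1 then c else 0) = ((n : ℝ) - 1) * c := by
  rw [← Finset.sum_filter, Finset.sum_const, aux_card n hn, nsmul_eq_mul,
    Nat.cast_sub (by omega), Nat.cast_one]

lemma aux_single {m : ℕ} (P : Fin m → Prop) [DecidablePred P] (h : ∀ a b, P a → P b → a = b) (c : ℝ)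
    (hc : 0 ≤ c) : (∑ j, if P j then c else 0) ≤ c := by
  rw [← Finset.sum_filter, Finset.sum_const, nsmul_eq_mul]
  have h1 : (Finset.univ.filter P).card ≤ 1 := by
    rw [Finset.card_le_one]
    intro a ha b hb
    simp only [Finset.mem_filter, Finset.mem_univ, true_and] at ha hb
    exact h a b ha hb
  have h2 : ((Finset.univ.filter P).card : ℝ) ≤ 1 := by exact_mod_cast h1
  nlinarith

/-- The `n²`-robustness of `SimpleScaledGreedy` is asymptotically tight:
for every `n ≥ 2` and `ε > 0` there are an instance `p` and a prediction `p̂` on `n` machines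
and `2n−2` jobs (with nonnegative processing times) together with an optimal predicted
schedule `x̂` for `p̂`, such that the output of `SimpleScaledGreedy` has makespan at least
`n(n−1)` while `OPT(p) ≤ 1+ε`; hence `MS(p,x) ≥ (n(n−1)/(1+ε))·OPT(p)`. -/
theorem ssg_robustness_tight (n : ℕ) [NeZero n] (hn : 2 ≤ n) (ε : ℝ) (hε : 0 < ε) :
    ∃ (p phat : Fin n → Fin (2 * n - 2) → ℝ) (xhat : Fin (2 * n - 2) → Fin n),
      (∀ i j, 0 ≤ p i j) ∧ (∀ i j, 0 ≤ phat i j) ∧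
      MS phat xhat = OPT phat ∧
      (n : ℝ) * ((n : ℝ) - 1) ≤ MS p (ssgAssign p phat xhat) ∧
      OPT p ≤ 1 + ε ∧
      ((n : ℝ) * ((n : ℝ) - 1) / (1 + ε)) * OPT p ≤ MS p (ssgAssign p phat xhat) := by
  have hn2 : (2 : ℝ) ≤ n := by exact_mod_cast hn
  set p : Fin n → Fin (2 * n - 2) → ℝ := fun i j =>
    if (j : ℕ) < n - 1 then (if (i : ℕ) = 0 then (n : ℝ) else 1) else 0 with hp
  set q : Fin n → Fin (2 * n - 2) → ℝ := fun i j =>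
    if (j : ℕ) < n - 1 then (if (i : ℕ) = 0 then (1 : ℝ) else 1 / n) else (n : ℝ) - 1 with hq
  set x : Fin (2 * n - 2) → Fin n := fun j =>
    if h : (j : ℕ) < n - 1 then ⟨0, by omega⟩ else ⟨j - (n - 1) + 1, by omega⟩ with hx
  set y : Fin (2 * n - 2) → Fin n := fun j =>
    if h : (j : ℕ) < n - 1 then ⟨j + 1, by omega⟩ else ⟨0, by omega⟩ with hy
  have hp0 : ∀ i j, 0 ≤ p i j := by
    intro i j
    simp only [hp]
    split_ifs <;> linarith
  have hq0 : ∀ i j, 0 ≤ q i j := by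
    intro i j
    simp only [hq]
    split_ifs
    · norm_num
    · positivity
    · linarith
  have hxq : MS q x ≤ (n : ℝ) - 1 := by
    unfold MS
    apply Finset.sup'_le
    intro i _
    by_cases hi : (i : ℕ) = 0
    · rw [← mul_one ((n : ℝ) - 1), ← aux_sum n hn 1]
      apply Finset.sum_le_sum
      intro j _
      by_cases hj : (j : ℕ) < n - 1
      · simp only [hx, hq, hj, hi]
        split_ifs <;> simp_all
      · have : x j ≠ i := by
          intro h
          have := congrArg Fin.val h
          simp [hx, hj, hi] at this
        simp [this, hj]
    · refine le_trans (le_of_eq ?_) (aux_single (fun j => x j = i) ?_ ((n : ℝ) - 1) (by linarith))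
      · apply Finset.sum_congr rfl
        intro j _
        by_cases h : x j = i
        · have hj : ¬ (j : ℕ) < n - 1 := by
            intro hj
            apply hi
            rw [← h]
            simp [hx, hj]
          simp [h, hq, hj]
        · simp [h]
      · intro a b ha hb
        have ha' := congrArg Fin.val ha
        have hb' := congrArg Fin.val hb
        simp only [hx] at ha' hb'
        split_ifs at ha' hb' <;> simp only at ha' hb' <;> omega
  have hopt : (n : ℝ) - 1 ≤ OPT q := by
    unfold OPT
    apply Finset.le_inf'
    intro a _
    let d : Fin (2 * n - 2) := ⟨n - 1, by omega⟩
    have h1 : (n : ℝ) - 1 = if a d = a d then q (a d) d else 0 := by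
      simp [hq, d]
    unfold MS
    refine le_trans ?_ (Finset.le_sup' _ (Finset.mem_univ (a d)))
    rw [h1]
    refine Finset.single_le_sum (f := fun j => if a j = a d then q (a d) j else 0) ?_
      (Finset.mem_univ d)
    intro j _
    split_ifs
    · exact hq0 _ _
    · exact le_rfl
  have hopt' : OPT q ≤ MS q x := by
    unfold OPT
    exact Finset.inf'_le _ (Finset.mem_univ x)
  have hassign : ∀ j : Fin (2 * n - 2), (j : ℕ) < n - 1 → ((ssgAssign p q x j : Fin n) : ℕ) = 0 := by
    intro j hj
    have hxj : ((x j : Fin n) : ℕ) = 0 := by simp [hx, hj]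
    have hn0 : (n : ℝ) ≠ 0 := by linarith
    have : ∀ i, ssgR q x (x j) j * p (x j) j ≤ ssgR q x i j * p i j := by
      intro i
      have e1 : ssgR q x (x j) j * p (x j) j = n := by
        simp only [ssgR, hp, hq, hj, hxj, if_true]
        rw [div_one, min_eq_left (by linarith), max_self, one_mul]
      rw [e1]
      by_cases hi : (i : ℕ) = 0
      · simp only [ssgR, hp, hq, hj, hxj, hi, if_true]
        rw [div_one, min_eq_left (by linarith), max_self, one_mul]
      · simp only [ssgR, hp, hq, hj, hxj, hi, if_true, if_false]
        rw [one_div_one_div, min_self, mul_one]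
        exact le_max_right _ _
    unfold ssgAssign
    simp only
    rw [if_pos this]
    exact hxj
  have hMS : (n : ℝ) * ((n : ℝ) - 1) ≤ MS p (ssgAssign p q x) := by
    unfold MS
    refine le_trans ?_ (Finset.le_sup' _ (Finset.mem_univ (⟨0, by omega⟩ : Fin n)))
    rw [mul_comm, ← aux_sum n hn]
    apply Finset.sum_le_sum
    intro j _
    by_cases hj : (j : ℕ) < n - 1
    · have : ssgAssign p q x j = (⟨0, by omega⟩ : Fin n) := Fin.ext (hassign j hj)
      rw [if_pos hj, if_pos this]
      simp [hp, hj]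
    · rw [if_neg hj]
      split_ifs
      · exact hp0 _ _
      · exact le_rfl
  have hoptp : OPT p ≤ 1 := by
    have h1 : OPT p ≤ MS p y := by
      unfold OPT
      exact Finset.inf'_le _ (Finset.mem_univ y)
    refine h1.trans ?_
    unfold MS
    apply Finset.sup'_le
    intro i _
    refine le_trans (Finset.sum_le_sum ?_)
      (aux_single (fun j : Fin (2 * n - 2) => (j : ℕ) + 1 = (i : ℕ)) ?_ 1 zero_le_one)
    · intro j _
      by_cases h : y j = i
      · have h' := congrArg Fin.val h
        rw [if_pos h]
        by_cases hj : (j : ℕ) < n - 1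
        · simp only [hy, hj, dite_true] at h'
          have hi : (i : ℕ) ≠ 0 := by omega
          simp only [hp, hj, h', hi, if_true, if_false, le_refl]
        · simp only [hp, hj, if_false]
          split_ifs <;> norm_num
      · rw [if_neg h]
        split_ifs <;> norm_num
    · intro a b ha hb
      ext
      omega
  refine ⟨p, q, x, hp0, hq0, le_antisymm (hxq.trans hopt) hopt', hMS, by linarith, ?_⟩
  refine le_trans ?_ hMS
  rw [div_mul_eq_mul_div, div_le_iff₀ (by linarith)]
  apply mul_le_mul_of_nonneg_left (by linarith)
  nlinarith
end
end

section
/- Consider the mechanism ScaledGreedy run on an instance p and predicted instance p̂ with predicted schedule x̂ and parameter γ > 0. If p̂ = p, then for every machine i, the set J_i computed by ScaledGreedy at termination equals M_i \ M̂_i. -/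
open scoped Classical
noncomputable section
variable {n m : ℕ}

/-- The state of the iterative loop of `ScaledGreedy`: the sets `J_i` and the scalars `r(i,j)`. -/
structure SGState (n m : ℕ) where
  J : Fin n → Finset (Fin m)
  r : Fin n → Fin m → ℝ

/-- The set `∪_i J_i` of jobs already put aside by the loop. -/
def sgAssigned (s : SGState n m) : Finset (Fin m) :=
  Finset.univ.filter fun j => ∃ i, j ∈ s.J i

/-- The set `I` of machines whose set `J_i` is not yet full. -/
def sgI [NeZero n] (phat : Fin n → Fin m → ℝ) (xhat : Fin m → Fin n) (γ : ℝ)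
    (s : SGState n m) : Finset (Fin n) :=
  Finset.univ.filter fun i => ∑ j ∈ s.J i, phat i j < γ * MS phat xhat

/-- The set `T` of candidate pairs `(i,j)`. -/
def sgT [NeZero n] (phat : Fin n → Fin m → ℝ) (xhat : Fin m → Fin n) (γ : ℝ)
    (s : SGState n m) : Finset (Fin n × Fin m) :=
  Finset.univ.filter fun q =>
    q.2 ∉ sgAssigned s ∧ q.1 ∈ sgI phat xhat γ s ∧
    phat q.1 q.2 < phat (xhat q.2) q.2 ∧
    ∀ i' ∈ sgI phat xhat γ s, phat i' q.2 < phat (xhat q.2) q.2 → phat q.1 q.2 ≤ phat i' q.2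

/-- The initial state of `ScaledGreedy`: `J_i = ∅` and `r(i,j) = max(p̂(î_j,j)/p̂(i,j), 1)`. -/
def sgInit (phat : Fin n → Fin m → ℝ) (xhat : Fin m → Fin n) : SGState n m :=
  ⟨fun _ => ∅, fun i j => max (phat (xhat j) j / phat i j) 1⟩

/-- One iteration of the while-loop of `ScaledGreedy`: a pair `(i*,j*) ∈ T` maximizing
`p̂(î_j,j)/p̂(i,j)` is selected, `j*` is added to `J_{i*}`, and `r(i,j*)` is set to `1` for
every machine `i` with `p̂(i*,j*) ≤ p̂(i,j*)`. -/
def SGStep [NeZero n] (phat : Fin n → Fin m → ℝ) (xhat : Fin m → Fin n) (γ : ℝ)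
    (s s' : SGState n m) : Prop :=
  ∃ q ∈ sgT phat xhat γ s,
    (∀ q' ∈ sgT phat xhat γ s,
      phat (xhat q'.2) q'.2 / phat q'.1 q'.2 ≤ phat (xhat q.2) q.2 / phat q.1 q.2) ∧
    s'.J = (fun i => if i = q.1 then insert q.2 (s.J i) else s.J i) ∧
    s'.r = fun i j => if j = q.2 ∧ phat q.1 q.2 ≤ phat i q.2 then 1 else s.r i j

/-- `s` is the state of `ScaledGreedy` at termination: it is reachable from the initial state
by iterations of the loop, and `T = ∅` so the loop has terminated. -/
def SGFinal [NeZero n] (phat : Fin n → Fin m → ℝ) (xhat : Fin m → Fin n) (γ : ℝ)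
    (s : SGState n m) : Prop :=
  Relation.ReflTransGen (SGStep phat xhat γ) (sgInit phat xhat) s ∧ sgT phat xhat γ s = ∅

/-- The allocation computed by `ScaledGreedy` from the terminal state `s`: each job `j` goes to
a machine minimizing `r(i,j)·p(i,j)`, with ties broken in favor of `î_j` first, then the machine
`i'` with `j ∈ J_{i'}` (if any), then the smallest-index machine. -/
def sgAssign [NeZero n] (s : SGState n m) (xhat : Fin m → Fin n)
    (p : Fin n → Fin m → ℝ) (j : Fin m) : Fin n :=
  let v : Fin n → ℝ := fun i => s.r i j * p i j
  if ∀ i, v (xhat j) ≤ v i then xhat j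
  else if h : ∃ i', j ∈ s.J i' ∧ ∀ i, v i' ≤ v i then Classical.choose h
  else (Finset.univ.filter fun i => ∀ i', v i ≤ v i').min' (exists_argmin v)

/-- `max_j r(i,j)`, the largest scalar of machine `i`. -/
def maxScalar [NeZero m] (r : Fin n → Fin m → ℝ) (i : Fin n) : ℝ :=
  Finset.univ.sup' Finset.univ_nonempty fun j => r i j
lemma sg_inv [NeZero n] (phat : Fin n → Fin m → ℝ) (xhat : Fin m → Fin n) (γ : ℝ) (s : SGState n m)
    (h : Relation.ReflTransGen (SGStep phat xhat γ) (sgInit phat xhat) s) (j : Fin m) :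
    ((∀ i, j ∉ s.J i) ∧ ∀ i, s.r i j = max (phat (xhat j) j / phat i j) 1) ∨
    (∃ i, (∀ i', j ∈ s.J i' ↔ i' = i) ∧ phat i j < phat (xhat j) j ∧
      ∀ i', s.r i' j = if phat i j ≤ phat i' j then 1
        else max (phat (xhat j) j / phat i' j) 1) := by
  induction h with
  | refl => left; simp [sgInit]
  | @tail s t _ hst ih =>
    obtain ⟨q, hq, -, hJ, hr⟩ := hst
    simp only [sgT, sgAssigned, Finset.mem_filter, Finset.mem_univ, true_and, not_exists] at hq
    obtain ⟨hna, -, hlt, -⟩ := hq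
    by_cases hj : j = q.2
    · subst hj
      rcases ih with ⟨h1, h2⟩ | ⟨i, h1, -⟩
      · right
        refine ⟨q.1, ?_, hlt, ?_⟩
        · intro i'
          rw [hJ]
          by_cases h : i' = q.1 <;> simp [h, h1]
        · intro i'
          rw [hr]
          simp [h2]
      · exact absurd ((h1 i).2 rfl) (hna i)
    · have e1 : ∀ i', j ∈ t.J i' ↔ j ∈ s.J i' := by
        intro i'
        rw [hJ]
        by_cases h : i' = q.1 <;> simp [h, hj]
      have e2 : ∀ i', t.r i' j = s.r i' j := by
        intro i'
        rw [hr]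
        simp [hj]
      simpa only [e1, e2] using ih

/-- If `ScaledGreedy` is run with an accurate prediction `p̂ = p`, then at
termination `J_i = M_i \ M̂_i` for every machine `i`. -/
theorem sg_J_eq_assigned_diff [NeZero n]
    (p phat : Fin n → Fin m → ℝ) (xhat : Fin m → Fin n) (γ : ℝ) (s : SGState n m)
    (hp : ∀ i j, 0 < p i j) (hphat : ∀ i j, 0 < phat i j) (hγ : 0 < γ)
    (hfinal : SGFinal phat xhat γ s) (hpred : phat = p) (i : Fin n) :
    s.J i = Finset.univ.filter (fun j => sgAssign s xhat p j = i ∧ xhat j ≠ i) := by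
  subst hpred
  have hmul : ∀ i j, max (phat (xhat j) j / phat i j) 1 * phat i j
      = max (phat (xhat j) j) (phat i j) := by
    intro i j
    rw [max_mul_of_nonneg _ _ (hphat i j).le, div_mul_cancel₀ _ (hphat i j).ne', one_mul]
  ext j
  simp only [Finset.mem_filter, Finset.mem_univ, true_and]
  rcases sg_inv phat xhat γ s hfinal.1 j with ⟨h1, h2⟩ | ⟨k, h1, hlt, h2⟩
  · have : sgAssign s xhat phat j = xhat j := by
      unfold sgAssign
      simp only
      rw [if_pos]
      intro i
      rw [h2, h2, hmul, hmul]
      simp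
    rw [this]
    simp [h1 i]
  · have hk : s.r k j * phat k j = phat k j := by rw [h2]; simp
    have hmin : ∀ i, s.r k j * phat k j ≤ s.r i j * phat i j := by
      intro i
      rw [hk, h2]
      split_ifs with h
      · simpa using h
      · rw [hmul]
        exact hlt.le.trans (le_max_left _ _)
    have hx : s.r (xhat j) j * phat (xhat j) j = phat (xhat j) j := by
      rw [h2, if_pos hlt.le, one_mul]
    have : sgAssign s xhat phat j = k := by
      unfold sgAssign
      simp only
      rw [if_neg]
      · have h : ∃ i', j ∈ s.J i' ∧ ∀ i, s.r i' j * phat i' j ≤ s.r i j * phat i j :=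
          ⟨k, (h1 k).2 rfl, hmin⟩
        rw [dif_pos h]
        exact (h1 _).1 (Classical.choose_spec h).1
      · intro h
        have := h k
        rw [hk, hx] at this
        linarith
    rw [this, h1 i]
    constructor
    · rintro rfl
      refine ⟨rfl, fun h => ?_⟩
      rw [h] at hlt
      exact lt_irrefl _ hlt
    · exact fun h => h.1.symm
end
end

section
/- Consider the mechanism ScaledGreedy run with predicted schedule x̂ satisfying MS(p̂, x̂) ≤ α·OPT(p̂) for some α ≥ 1, and parameter γ ≥ 0. For every machine i, if the set J_i computed at termination equals M_i \ M̂_i, then Σ_{j ∈ M_i \ M̂_i} p̂(i,j) < (1+γ)·α·OPT(p̂). -/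
open scoped Classical
noncomputable section
variable {n m : ℕ}

lemma sg_le_MS [NeZero n] (phat : Fin n → Fin m → ℝ) (xhat : Fin m → Fin n)
    (hphat : ∀ i j, 0 < phat i j) (j : Fin m) : phat (xhat j) j ≤ MS phat xhat := by
  have h1 : (∑ k, if xhat k = xhat j then phat (xhat j) k else 0) ≤ MS phat xhat :=
    Finset.le_sup' (fun i => ∑ k, if xhat k = i then phat i k else 0) (Finset.mem_univ (xhat j))
  have h2 : (if xhat j = xhat j then phat (xhat j) j else 0)
      ≤ ∑ k, if xhat k = xhat j then phat (xhat j) k else 0 :=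
    Finset.single_le_sum (f := fun k => if xhat k = xhat j then phat (xhat j) k else 0)
      (fun k _ => by
        split_ifs
        · exact (hphat _ _).le
        · exact le_rfl) (Finset.mem_univ j)
  rw [if_pos rfl] at h2
  exact h2.trans h1

lemma sg_invariant [NeZero n] [NeZero m] (phat : Fin n → Fin m → ℝ) (xhat : Fin m → Fin n)
    (γ : ℝ) (s : SGState n m) (hphat : ∀ i j, 0 < phat i j) (hγ : 0 ≤ γ)
    (h : Relation.ReflTransGen (SGStep phat xhat γ) (sgInit phat xhat) s) (i : Fin n) :
    ∑ j ∈ s.J i, phat i j < (1 + γ) * MS phat xhat := by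
  induction h with
  | refl =>
    have h0 : 0 < MS phat xhat := lt_of_lt_of_le (hphat _ _) (sg_le_MS phat xhat hphat 0)
    simp only [sgInit, Finset.sum_empty]
    positivity
  | tail _ hst ih =>
    obtain ⟨q, hq, -, hJ, -⟩ := hst
    rw [hJ]
    dsimp only
    split_ifs with hi
    · subst hi
      simp only [sgT, sgAssigned, sgI, Finset.mem_filter, Finset.mem_univ, true_and] at hq
      obtain ⟨hn, hI, hlt, -⟩ := hq
      rw [Finset.sum_insert (fun hm => hn ⟨_, hm⟩)]
      have := sg_le_MS phat xhat hphat q.2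
      linarith
    · exact ih

/-- For every machine `i`, if the set `J_i` computed by `ScaledGreedy` at
termination equals `M_i \ M̂_i`, then `Σ_{j ∈ M_i \ M̂_i} p̂(i,j) < (1+γ)·α·OPT(p̂)`. -/
theorem sg_bound_difference [NeZero n] [NeZero m]
    (p phat : Fin n → Fin m → ℝ) (xhat : Fin m → Fin n) (γ α : ℝ) (s : SGState n m)
    (hp : ∀ i j, 0 < p i j) (hphat : ∀ i j, 0 < phat i j)
    (hα : 1 ≤ α) (hMS : MS phat xhat ≤ α * OPT phat) (hγ : 0 ≤ γ)
    (hfinal : SGFinal phat xhat γ s) (i : Fin n)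
    (hJ : s.J i = Finset.univ.filter (fun j => sgAssign s xhat p j = i ∧ xhat j ≠ i)) :
    ∑ j ∈ Finset.univ.filter (fun j => sgAssign s xhat p j = i ∧ xhat j ≠ i), phat i j
      < (1 + γ) * α * OPT phat := by
  rw [← hJ]
  have h1 := sg_invariant phat xhat γ s hphat hγ hfinal.1 i
  have h2 := mul_le_mul_of_nonneg_left hMS (by linarith : (0 : ℝ) ≤ 1 + γ)
  rw [← mul_assoc] at h2
  exact h1.trans_le h2
end
end

section
/- The mechanism ScaledGreedy is (2+γ)α-consistent: if it is run on an instance p and predicted instance p̂ with p̂ = p, using a predicted schedule x̂ satisfying MS(p̂, x̂) ≤ α·OPT(p̂) for some α ≥ 1 and any parameter γ ≥ 0, then the allocation x it outputs satisfies MS(p, x) ≤ (2+γ)·α·OPT(p). -/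
open scoped Classical
noncomputable section
variable {n m : ℕ}

lemma MS_ge [NeZero n] (p : Fin n → Fin m → ℝ) (a : Fin m → Fin n) (i : Fin n) :
    (∑ j, if a j = i then p i j else 0) ≤ MS p a := by
  unfold MS
  exact Finset.le_sup' (fun i => ∑ j, if a j = i then p i j else 0) (Finset.mem_univ i)

lemma MS_ge_job [NeZero n] (p : Fin n → Fin m → ℝ) (hp : ∀ i j, 0 < p i j)
    (a : Fin m → Fin n) (j : Fin m) : p (a j) j ≤ MS p a := by
  refine le_trans ?_ (MS_ge p a (a j))
  have h := Finset.single_le_sum (s := Finset.univ)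
    (f := fun j' => if a j' = a j then p (a j) j' else 0)
    (fun j' _ => by
      show 0 ≤ if a j' = a j then p (a j) j' else 0
      split_ifs
      · exact (hp _ _).le
      · exact le_rfl) (Finset.mem_univ j)
  simpa using h

lemma MS_nonneg [NeZero n] (p : Fin n → Fin m → ℝ) (hp : ∀ i j, 0 < p i j)
    (a : Fin m → Fin n) : 0 ≤ MS p a := by
  refine le_trans (Finset.sum_nonneg fun j _ => ?_) (MS_ge p a 0)
  split_ifs
  · exact (hp _ _).le
  · exact le_rfl

structure SGInv [NeZero n] (p : Fin n → Fin m → ℝ) (xhat : Fin m → Fin n) (γ : ℝ)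
    (s : SGState n m) : Prop where
  lt : ∀ i j, j ∈ s.J i → p i j < p (xhat j) j
  r1 : ∀ i j, j ∈ s.J i → ∀ i', p i j ≤ p i' j → s.r i' j = 1
  r2 : ∀ i j, j ∈ s.J i → ∀ i', ¬ p i j ≤ p i' j → s.r i' j = max (p (xhat j) j / p i' j) 1
  uniq : ∀ i i' j, j ∈ s.J i → j ∈ s.J i' → i = i'
  un : ∀ j, (∀ i, j ∉ s.J i) → ∀ i', s.r i' j = max (p (xhat j) j / p i' j) 1
  sum : ∀ i, ∑ j ∈ s.J i, p i j ≤ (1 + γ) * MS p xhat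

lemma SGInv.init [NeZero n] (p : Fin n → Fin m → ℝ) (hp : ∀ i j, 0 < p i j)
    (xhat : Fin m → Fin n) (γ : ℝ) (hγ : 0 ≤ γ) : SGInv p xhat γ (sgInit p xhat) := by
  have := MS_nonneg p hp xhat
  constructor <;> simp [sgInit]
  positivity

lemma SGInv.step [NeZero n] (p : Fin n → Fin m → ℝ) (hp : ∀ i j, 0 < p i j)
    (xhat : Fin m → Fin n) (γ : ℝ) (s s' : SGState n m)
    (h : SGInv p xhat γ s) (hs : SGStep p xhat γ s s') : SGInv p xhat γ s' := by
  obtain ⟨⟨i0, j0⟩, hq, -, hJ, hr⟩ := hs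
  simp only [sgT, sgI, sgAssigned, Finset.mem_filter, Finset.mem_univ, true_and, not_exists] at hq
  obtain ⟨hun, hI, hlt, -⟩ := hq
  have hmem : ∀ i j, j ∈ s'.J i ↔ (j ∈ s.J i ∨ (i = i0 ∧ j = j0)) := by
    intro i j
    rw [hJ]
    by_cases hi : i = i0 <;> simp [hi, or_comm]
  have hr1 : ∀ i, p i0 j0 ≤ p i j0 → s'.r i j0 = 1 := by
    intro i hi; rw [hr]; simp [hi]
  have hr2 : ∀ i, ¬ p i0 j0 ≤ p i j0 → s'.r i j0 = s.r i j0 := by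
    intro i hi; rw [hr]; simp only [hi, and_false, if_false]
  have hr3 : ∀ i j, j ≠ j0 → s'.r i j = s.r i j := by
    intro i j hj; rw [hr]; simp [hj]
  have hne : ∀ i j, j ∈ s.J i → j ≠ j0 := by
    rintro i j hj rfl; exact hun i hj
  constructor
  · intro i j hj
    rcases (hmem i j).1 hj with hj | ⟨rfl, rfl⟩
    · exact h.lt i j hj
    · exact hlt
  · intro i j hj i' hi'
    rcases (hmem i j).1 hj with hj | ⟨rfl, rfl⟩
    · rw [hr3 _ _ (hne _ _ hj)]; exact h.r1 i j hj i' hi'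
    · exact hr1 i' hi'
  · intro i j hj i' hi'
    rcases (hmem i j).1 hj with hj | ⟨rfl, rfl⟩
    · rw [hr3 _ _ (hne _ _ hj)]; exact h.r2 i j hj i' hi'
    · rw [hr2 i' hi']; exact h.un j hun i'
  · intro i i' j hj hj'
    rcases (hmem i j).1 hj with hj | ⟨rfl, rfl⟩ <;>
    rcases (hmem i' j).1 hj' with hj' | ⟨h1, h2⟩
    · exact h.uniq i i' j hj hj'
    · exact absurd h2 (hne _ _ hj)
    · exact absurd hj' (hun _)
    · exact h1.symm
  · intro j hj i'
    have hj0 : j ≠ j0 := by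
      rintro rfl; exact hj i0 ((hmem _ _).2 (Or.inr ⟨rfl, rfl⟩))
    rw [hr3 _ _ hj0]
    exact h.un j (fun i hi => hj i ((hmem _ _).2 (Or.inl hi))) i'
  · intro i
    by_cases hi : i = i0
    · subst hi
      have : s'.J i = insert j0 (s.J i) := by rw [hJ]; simp
      rw [this, Finset.sum_insert (hun i)]
      have := MS_ge_job p hp xhat j0
      dsimp only at *
      linarith
    · have : s'.J i = s.J i := by rw [hJ]; simp [hi]
      rw [this]; exact h.sum i

lemma SGInv.assign [NeZero n] (p : Fin n → Fin m → ℝ) (hp : ∀ i j, 0 < p i j)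
    (xhat : Fin m → Fin n) (γ : ℝ) (s : SGState n m)
    (h : SGInv p xhat γ s) (j : Fin m) :
    sgAssign s xhat p j = xhat j ∨ j ∈ s.J (sgAssign s xhat p j) := by
  have hmax : ∀ i', p (xhat j) j ≤ max (p (xhat j) j / p i' j) 1 * p i' j := by
    intro i'
    calc p (xhat j) j = p (xhat j) j / p i' j * p i' j := by
          field_simp [(hp i' j).ne']
      _ ≤ _ := mul_le_mul_of_nonneg_right (le_max_left _ _) (hp _ _).le
  unfold sgAssign
  dsimp only
  split_ifs with h1 h2
  · exact Or.inl rfl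
  · exact Or.inr (Classical.choose_spec h2).1
  · exfalso
    by_cases hj : ∃ i, j ∈ s.J i
    · obtain ⟨i, hi⟩ := hj
      apply h2
      refine ⟨i, hi, fun i' => ?_⟩
      rw [h.r1 i j hi i le_rfl, one_mul]
      by_cases hle : p i j ≤ p i' j
      · rw [h.r1 i j hi i' hle, one_mul]; exact hle
      · rw [h.r2 i j hi i' hle]
        exact (h.lt i j hi).le.trans (hmax i')
    · push Not at hj
      apply h1
      intro i
      rw [h.un j hj, h.un j hj, div_self (hp _ _).ne', max_self, one_mul]
      exact hmax i

/-- `ScaledGreedy` is `(2+γ)α`-consistent: when `p̂ = p` and the predicted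
schedule satisfies `MS(p̂,x̂) ≤ α·OPT(p̂)`, the output allocation has makespan at most
`(2+γ)·α·OPT(p)`. -/
theorem sg_consistency [NeZero n]
    (p phat : Fin n → Fin m → ℝ) (xhat : Fin m → Fin n) (γ α : ℝ) (s : SGState n m)
    (hp : ∀ i j, 0 < p i j) (hphat : ∀ i j, 0 < phat i j)
    (hα : 1 ≤ α) (hMS : MS phat xhat ≤ α * OPT phat) (hγ : 0 ≤ γ)
    (hfinal : SGFinal phat xhat γ s) (hpred : phat = p) :
    MS p (sgAssign s xhat p) ≤ (2 + γ) * α * OPT p := by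
  subst hpred
  have hinv : SGInv phat xhat γ s := by
    have := hfinal.1
    clear hfinal
    induction this with
    | refl => exact SGInv.init phat hp xhat γ hγ
    | tail _ hs ih => exact SGInv.step phat hp xhat γ _ _ ih hs
  have key : MS phat (sgAssign s xhat phat) ≤ (2 + γ) * MS phat xhat := by
    conv_lhs => unfold MS
    refine Finset.sup'_le _ _ fun i _ => ?_
    calc (∑ j, if sgAssign s xhat phat j = i then phat i j else 0)
        ≤ ∑ j, ((if xhat j = i then phat i j else 0) + (if j ∈ s.J i then phat i j else 0)) := by
          refine Finset.sum_le_sum fun j _ => ?_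
          have hpos := hp i j
          have ha := SGInv.assign phat hp xhat γ s hinv j
          by_cases hi : sgAssign s xhat phat j = i
          · rw [hi] at ha
            rcases ha with ha | ha
            · rw [if_pos hi, if_pos ha.symm]; split_ifs <;> linarith
            · rw [if_pos hi, if_pos ha]; split_ifs <;> linarith
          · rw [if_neg hi]; split_ifs <;> linarith
      _ = (∑ j, if xhat j = i then phat i j else 0) + ∑ j ∈ s.J i, phat i j := by
          rw [Finset.sum_add_distrib]; simp
      _ ≤ MS phat xhat + (1 + γ) * MS phat xhat := add_le_add (MS_ge _ _ _) (hinv.sum i)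
      _ = _ := by ring
  calc _ ≤ _ := key
    _ ≤ (2 + γ) * (α * OPT phat) := mul_le_mul_of_nonneg_left hMS (by linarith)
    _ = _ := by ring
end
end

section
/- Consider the mechanism ScaledGreedy with parameter γ > 0, and let r denote the scalars when ScaledGreedy terminates. Then the sum, over all machines i such that max_j r(i,j) > 1, of max_j r(i,j), is at most n/γ. -/
open scoped Classical
noncomputable section
variable {n m : ℕ}

structure SGInv_s12 [NeZero n] (phat : Fin n → Fin m → ℝ) (xhat : Fin m → Fin n) (γ : ℝ)
    (s : SGState n m) : Prop where
  A : ∀ i i' j, j ∈ s.J i → j ∈ s.J i' → i = i'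
  B : ∀ i j, 1 < s.r i j → s.r i j = phat (xhat j) j / phat i j
  C : ∀ i j, 1 < s.r i j → i ∈ sgI phat xhat γ s → j ∉ sgAssigned s
  D : ∀ i j, 1 < s.r i j → ∀ j' ∈ s.J i, s.r i j ≤ phat (xhat j') j' / phat i j'

lemma sgT_exists [NeZero n] (phat : Fin n → Fin m → ℝ) (xhat : Fin m → Fin n) (γ : ℝ)
    (s : SGState n m) (i : Fin n) (j : Fin m) (hi : i ∈ sgI phat xhat γ s)
    (hj : j ∉ sgAssigned s) (hlt : phat i j < phat (xhat j) j) :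
    ∃ i', (i', j) ∈ sgT phat xhat γ s ∧ phat i' j ≤ phat i j := by
  obtain ⟨k, hk, hmin⟩ := Finset.exists_min_image
    ((sgI phat xhat γ s).filter fun i' => phat i' j < phat (xhat j) j) (fun i' => phat i' j)
    ⟨i, by simp [hi, hlt]⟩
  rw [Finset.mem_filter] at hk
  refine ⟨k, ?_, hmin i (by simp [hi, hlt])⟩
  simp only [sgT, Finset.mem_filter, Finset.mem_univ, true_and]
  exact ⟨hj, hk.1, hk.2, fun i' h1 h2 => hmin i' (by simp [h1, h2])⟩

lemma sg_lt_of_one_lt [NeZero n] {phat : Fin n → Fin m → ℝ} {xhat : Fin m → Fin n} {γ : ℝ}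
    {s : SGState n m} (hphat : ∀ i j, 0 < phat i j) (h : SGInv_s12 phat xhat γ s)
    {i : Fin n} {j : Fin m} (hr : 1 < s.r i j) : phat i j < phat (xhat j) j := by
  have h1 := h.B i j hr
  rw [h1, one_lt_div (hphat i j)] at hr
  exact hr

lemma sgInv_step [NeZero n] {phat : Fin n → Fin m → ℝ} {xhat : Fin m → Fin n} {γ : ℝ}
    {s s' : SGState n m} (hphat : ∀ i j, 0 < phat i j) (h : SGInv_s12 phat xhat γ s)
    (hs : SGStep phat xhat γ s s') : SGInv_s12 phat xhat γ s' := by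
  obtain ⟨⟨i0, j0⟩, hq, hmax, hJ, hr⟩ := hs
  have hq' := hq
  simp only [sgT, Finset.mem_filter, Finset.mem_univ, true_and] at hq'
  obtain ⟨hna, hI0, hlt0, hmin0⟩ := hq'
  simp only at hJ hr hmax
  have hJmem : ∀ i j, j ∈ s'.J i ↔ (j ∈ s.J i ∨ (i = i0 ∧ j = j0)) := by
    intro i j
    rw [hJ]
    by_cases hi : i = i0
    · simp [hi]; tauto
    · simp [hi]
  have hrr : ∀ i j, 1 < s'.r i j → 1 < s.r i j ∧ s'.r i j = s.r i j ∧
      (j = j0 → phat i j0 < phat i0 j0) := by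
    intro i j h1
    rw [hr] at h1 ⊢
    simp only at h1 ⊢
    split_ifs at h1 ⊢ with hc
    · exact absurd h1 (lt_irrefl _)
    · refine ⟨h1, rfl, fun e => ?_⟩
      by_contra hcon
      exact hc ⟨e, not_lt.mp hcon⟩
  have hIsub : ∀ i, i ∈ sgI phat xhat γ s' → i ∈ sgI phat xhat γ s := by
    intro i hi
    simp only [sgI, Finset.mem_filter, Finset.mem_univ, true_and] at hi ⊢
    refine lt_of_le_of_lt (Finset.sum_le_sum_of_subset_of_nonneg ?_ ?_) hi
    · intro j hj
      exact (hJmem i j).2 (Or.inl hj)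
    · intro j _ _
      exact (hphat i j).le
  have hna' : ∀ i, j0 ∉ s.J i := by
    intro i hi
    apply hna
    simp only [sgAssigned, Finset.mem_filter, Finset.mem_univ, true_and]
    exact ⟨i, hi⟩
  refine ⟨?_, ?_, ?_, ?_⟩
  · intro i i' j h1 h2
    rw [hJmem] at h1 h2
    rcases h1 with h1 | ⟨h1, e1⟩ <;> rcases h2 with h2 | ⟨h2, e2⟩
    · exact h.A i i' j h1 h2
    · subst e2; exact absurd h1 (hna' _)
    · subst e1; exact absurd h2 (hna' _)
    · rw [h1, h2]
  · intro i j h1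
    obtain ⟨h2, h3, _⟩ := hrr i j h1
    rw [h3, h.B i j h2]
  · intro i j h1 hi hj
    obtain ⟨h2, h3, h4⟩ := hrr i j h1
    have hiI := hIsub i hi
    simp only [sgAssigned, Finset.mem_filter, Finset.mem_univ, true_and] at hj
    obtain ⟨k, hk⟩ := hj
    rw [hJmem] at hk
    rcases hk with hk | ⟨_, hk⟩
    · apply h.C i j h2 hiI
      simp only [sgAssigned, Finset.mem_filter, Finset.mem_univ, true_and]
      exact ⟨k, hk⟩
    · have := h4 hk
      subst hk
      exact absurd (hmin0 i hiI (sg_lt_of_one_lt hphat h h2)) (not_le.mpr this)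
  · intro i j h1 j' hj'
    obtain ⟨h2, h3, h4⟩ := hrr i j h1
    rw [h3]
    rw [hJmem] at hj'
    rcases hj' with hj' | ⟨rfl, rfl⟩
    · exact h.D i j h2 j' hj'
    · obtain ⟨k, hk, hle⟩ := sgT_exists phat xhat γ s i j hI0 (h.C i j h2 hI0)
        (sg_lt_of_one_lt hphat h h2)
      rw [h.B i j h2]
      refine le_trans ?_ (hmax _ hk)
      exact div_le_div_of_nonneg_left (hphat _ _).le (hphat _ _) hle

lemma sgInv_init [NeZero n] (phat : Fin n → Fin m → ℝ) (xhat : Fin m → Fin n) (γ : ℝ) :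
    SGInv_s12 phat xhat γ (sgInit phat xhat) := by
  refine ⟨?_, ?_, ?_, ?_⟩
  · intro i i' j h
    simp [sgInit] at h
  · intro i j h
    simp only [sgInit] at h ⊢
    rcases lt_max_iff.mp h with h | h
    · exact max_eq_left h.le
    · exact absurd h (lt_irrefl _)
  · intro i j _ _
    simp [sgAssigned, sgInit]
  · intro i j _ j' h
    simp [sgInit] at h

/-- At termination of `ScaledGreedy`, the sum over all machines `i` with
`max_j r(i,j) > 1` of `max_j r(i,j)` is at most `n/γ`. -/
theorem sg_sum_max_scalar [NeZero n] [NeZero m]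
    (phat : Fin n → Fin m → ℝ) (xhat : Fin m → Fin n) (γ : ℝ) (s : SGState n m)
    (hphat : ∀ i j, 0 < phat i j) (hγ : 0 < γ)
    (hfinal : SGFinal phat xhat γ s) :
    ∑ i ∈ Finset.univ.filter (fun i => 1 < maxScalar s.r i), maxScalar s.r i
      ≤ (n : ℝ) / γ := by
  obtain ⟨hreach, hT⟩ := hfinal
  have hinv : SGInv_s12 phat xhat γ s := by
    clear hT
    induction hreach with
    | refl => exact sgInv_init phat xhat γ
    | tail _ hstep ih => exact sgInv_step hphat ih hstep
  have hload : ∀ i, (∑ j, if xhat j = i then phat i j else 0) ≤ MS phat xhat := by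
    intro i
    exact Finset.le_sup' (fun i => ∑ j, if xhat j = i then phat i j else 0) (Finset.mem_univ i)
  have htot : ∑ j, phat (xhat j) j ≤ n * MS phat xhat := by
    calc ∑ j, phat (xhat j) j = ∑ j, ∑ i, (if xhat j = i then phat i j else 0) := by
          simp
      _ = ∑ i, ∑ j, (if xhat j = i then phat i j else 0) := Finset.sum_comm
      _ ≤ ∑ _i : Fin n, MS phat xhat := Finset.sum_le_sum fun i _ => hload i
      _ = n * MS phat xhat := by simp
  have hMS : 0 < MS phat xhat := by
    have h1 : 0 < ∑ j, phat (xhat j) j :=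
      Finset.sum_pos (fun j _ => hphat _ _) Finset.univ_nonempty
    have h2 : (0 : ℝ) ≤ n := Nat.cast_nonneg n
    by_contra hc
    nlinarith [mul_nonneg h2 (neg_nonneg.mpr (not_lt.mp hc))]
  have hkey : ∀ i, 1 < maxScalar s.r i →
      maxScalar s.r i * (γ * MS phat xhat) ≤ ∑ j ∈ s.J i, phat (xhat j) j := by
    intro i hi
    obtain ⟨j, -, hj⟩ := Finset.exists_mem_eq_sup' Finset.univ_nonempty (fun j => s.r i j)
    change maxScalar s.r i = s.r i j at hj
    rw [hj] at hi ⊢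
    have hnI : i ∉ sgI phat xhat γ s := by
      intro hI
      obtain ⟨k, hk, _⟩ := sgT_exists phat xhat γ s i j hI (hinv.C i j hi hI)
        (sg_lt_of_one_lt hphat hinv hi)
      rw [hT] at hk
      simp at hk
    simp only [sgI, Finset.mem_filter, Finset.mem_univ, true_and, not_lt] at hnI
    calc s.r i j * (γ * MS phat xhat) ≤ s.r i j * ∑ j' ∈ s.J i, phat i j' :=
          mul_le_mul_of_nonneg_left hnI (by linarith)
      _ = ∑ j' ∈ s.J i, s.r i j * phat i j' := Finset.mul_sum _ _ _
      _ ≤ _ := Finset.sum_le_sum fun j' hj' =>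
          (le_div_iff₀ (hphat i j')).mp (hinv.D i j hi j' hj')
  rw [le_div_iff₀ hγ]
  refine le_of_mul_le_mul_right ?_ hMS
  refine le_trans ?_ htot
  rw [mul_assoc, Finset.sum_mul]
  calc _ ≤ ∑ i ∈ Finset.univ.filter (fun i => 1 < maxScalar s.r i),
          ∑ j ∈ s.J i, phat (xhat j) j :=
        Finset.sum_le_sum fun i hi => hkey i (Finset.mem_filter.mp hi).2
    _ = ∑ j ∈ (Finset.univ.filter (fun i => 1 < maxScalar s.r i)).biUnion s.J,
          phat (xhat j) j := by
        rw [Finset.sum_biUnion]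
        intro a _ b _ hab
        refine Finset.disjoint_left.mpr fun j h1 h2 => hab (hinv.A a b j h1 h2)
    _ ≤ _ := Finset.sum_le_sum_of_subset_of_nonneg (Finset.subset_univ _)
        fun j _ _ => (hphat _ _).le
end
end
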